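/- Let m ≥ 1 and define t : ℤ → ℤ by t(n) = T(m,n) for n ≥ 1 and t(n) = M(G(m,n)) (the signed number of matchings of the signed graph G(m,n) = G(m,−|n|)) for n ≤ 0. Then there exist integers c_0, …, c_{2^m − 1} such that t(n + 2^m) = ∑_{j=0}^{2^m − 1} c_j · t(n+j) for every n ∈ ℤ. (The doubly-infinite sequence of ordinary and signed matching counts satisfies a single constant-coefficient linear recurrence of order 2^m.) -/

import Mathlib

open Finset

/-- The m-by-n grid graph on `Fin m × Fin n`: vertices are adjacent iff they agree in
one coordinate and differ by exactly 1 in the other. -/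
def grid (m n : ℕ) : SimpleGraph (Fin m × Fin n) :=
  SimpleGraph.fromRel (fun p q =>
    (p.1 = q.1 ∧ (p.2 : ℕ) + 1 = q.2) ∨ (p.2 = q.2 ∧ (p.1 : ℕ) + 1 = q.1))

/-- A perfect matching: a set of edges of `G` such that every vertex belongs to
exactly one edge of the set. -/
def IsPM {V : Type*} (G : SimpleGraph V) (P : Finset (Sym2 V)) : Prop :=
  (∀ e ∈ P, e ∈ G.edgeSet) ∧ ∀ v : V, ∃! e, e ∈ P ∧ v ∈ e

/-- `T m n` is the number of perfect matchings of the m-by-n grid graph. -/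
noncomputable def T (m n : ℕ) : ℕ :=
  {P : Finset (Sym2 (Fin m × Fin n)) | IsPM (grid m n) P}.ncard

open scoped Classical in
/-- The finset of all perfect matchings of a graph on a finite vertex type. -/
noncomputable def pmFinset {V : Type*} [Fintype V] [DecidableEq V]
    (G : SimpleGraph V) : Finset (Finset (Sym2 V)) :=
  Finset.univ.filter (fun P => IsPM G P)

open scoped Classical in
/-- The number of vertical edges in `P` (edges whose endpoints differ in the
first, i.e. row, coordinate). -/
noncomputable def vert {m n : ℕ} (P : Finset (Sym2 (Fin m × Fin n))) : ℕ :=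
  (P.filter (fun e => ∃ p q : Fin m × Fin n, e = s(p, q) ∧ p.1 ≠ q.1)).card

/-- The underlying graph of the signed graph `G(m,-k)`: all horizontal edges, and
vertical edges only in columns 1 through k (0-indexed). -/
def negGrid (m k : ℕ) : SimpleGraph (Fin m × Fin (k + 2)) :=
  SimpleGraph.fromRel (fun p q =>
    (p.1 = q.1 ∧ (p.2 : ℕ) + 1 = q.2) ∨
    (p.2 = q.2 ∧ (p.1 : ℕ) + 1 = q.1 ∧ 1 ≤ (p.2 : ℕ) ∧ (p.2 : ℕ) ≤ k))

/-- The signed number of matchings `M(G(m,-k))`: every vertical edge has weight -1,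
every horizontal edge weight +1. -/
noncomputable def Msigned (m k : ℕ) : ℤ :=
  ∑ P ∈ pmFinset (negGrid m k), (-1 : ℤ) ^ vert P



/-- exactly one of four -/
def X1 (a b c d : Prop) : Prop :=
  (a ∨ b ∨ c ∨ d) ∧ ¬(a ∧ b) ∧ ¬(a ∧ c) ∧ ¬(a ∧ d) ∧ ¬(b ∧ c) ∧ ¬(b ∧ d) ∧ ¬(c ∧ d)

def pr {m : ℕ} (v : Finset (Fin m)) (i : Fin m) : Prop := ∃ i' : Fin m, (i' : ℕ) + 1 = i ∧ i' ∈ v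

def loc {m : ℕ} (A B v : Finset (Fin m)) : Prop :=
  (∀ i ∈ v, (i : ℕ) + 1 < m) ∧ ∀ i, X1 (i ∈ B) (i ∈ A) (i ∈ v) (pr v i)

open scoped Classical in
noncomputable def TM (m : ℕ) (ok : Prop) (x : ℤ) : Matrix (Finset (Fin m)) (Finset (Fin m)) ℤ :=
  fun A B => ∑ v : Finset (Fin m), if loc A B v ∧ (∀ i ∈ v, ok) then x ^ v.card else 0

set_option maxHeartbeats 2000000 in
open scoped Classical in
lemma TM_inv (m : ℕ) (A B : Finset (Fin m)) :
    ∑ X, TM m True 1 A Xᶜ * TM m True (-1) X Bᶜ = if A = B then 1 else 0 := by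
  have h1 : ∑ X, TM m True 1 A Xᶜ * TM m True (-1) X Bᶜ
      = ∑ z : Finset (Fin m) × Finset (Fin m) × Finset (Fin m),
        if (loc A z.1ᶜ z.2.1 ∧ loc z.1 Bᶜ z.2.2) then (-1) ^ z.2.2.card else 0 := by
    rw [Fintype.sum_prod_type]
    refine Finset.sum_congr rfl fun X _ => ?_
    rw [Fintype.sum_prod_type]
    unfold TM
    rw [Finset.sum_mul_sum]
    refine Finset.sum_congr rfl fun v _ => Finset.sum_congr rfl fun w _ => ?_
    by_cases h1 : loc A Xᶜ v <;> by_cases h2 : loc X Bᶜ w <;> simp [h1, h2]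
  have h2 : ∑ z : Finset (Fin m) × Finset (Fin m) × Finset (Fin m),
        (if (loc A z.1ᶜ z.2.1 ∧ loc z.1 Bᶜ z.2.2) then (-1) ^ z.2.2.card else 0 : ℤ)
      = ∑ z : Finset (Fin m) × Finset (Fin m),
        if (z.2 ⊆ z.1 ∧ loc A Bᶜ z.1) then (-1) ^ z.2.card else 0 := by
    rw [← Finset.sum_filter, ← Finset.sum_filter]
    refine Finset.sum_nbij' (fun z => (z.2.1 ∪ z.2.2, z.2.2))
      (fun z => (A ∪ Finset.univ.filter (fun i => i ∈ z.1 \ z.2 ∨ pr (z.1 \ z.2) i), z.1 \ z.2, z.2))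
      ?_ ?_ ?_ ?_ ?_
    · rintro ⟨X, v, w⟩ h
      simp only [Finset.mem_filter, Finset.mem_univ, true_and] at h ⊢
      obtain ⟨⟨hv, h1⟩, ⟨hw, h2⟩⟩ := h
      refine ⟨Finset.subset_union_right, ?_, ?_⟩
      · intro i hi
        rcases Finset.mem_union.1 hi with hi | hi
        · exact hv i hi
        · exact hw i hi
      · intro i
        have e : pr (v ∪ w) i ↔ pr v i ∨ pr w i := by
          unfold pr; simp only [Finset.mem_union]; grind
        have h1 := h1 i
        have h2 := h2 i
        unfold X1 at *
        rw [e]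
        simp only [Finset.mem_union, Finset.mem_compl] at *
        grind
    · rintro ⟨u, w⟩ h
      simp only [Finset.mem_filter, Finset.mem_univ, true_and] at h ⊢
      obtain ⟨hs, hu, h1⟩ := h
      have key : ∀ i, (pr u i ↔ pr (u \ w) i ∨ pr w i) ∧ ¬ (pr (u \ w) i ∧ pr w i) := by
        intro i
        constructor
        · unfold pr; simp only [Finset.mem_sdiff]; grind
        · rintro ⟨⟨a, ha, ha'⟩, ⟨b, hb, hb'⟩⟩
          have : a = b := by ext; omega
          subst this
          exact (Finset.mem_sdiff.1 ha').2 hb'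
      refine ⟨⟨fun i hi => hu i (Finset.mem_sdiff.1 hi).1, fun i => ?_⟩,
        ⟨fun i hi => hu i (hs hi), fun i => ?_⟩⟩
      all_goals
        have h1 := h1 i
        have h3 := @hs i
        have h4 := key i
        unfold X1 at *
        simp only [Finset.mem_union, Finset.mem_compl, Finset.mem_filter, Finset.mem_univ, true_and, Finset.mem_sdiff] at *
        grind
    · rintro ⟨X, v, w⟩ h
      simp only [Finset.mem_filter, Finset.mem_univ, true_and] at h ⊢
      obtain ⟨⟨hv, h1⟩, ⟨hw, h2⟩⟩ := h
      have e : (v ∪ w) \ w = v := by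
        ext i
        have h1 := h1 i
        have h2 := h2 i
        unfold X1 at *
        simp only [Finset.mem_union, Finset.mem_compl, Finset.mem_sdiff] at *
        grind
      rw [e]
      simp only [Prod.mk.injEq, and_true]
      ext i
      have h1 := h1 i
      unfold X1 at *
      simp only [Finset.mem_union, Finset.mem_compl, Finset.mem_filter, Finset.mem_univ, true_and] at *
      grind
    · rintro ⟨u, w⟩ h
      simp only [Finset.mem_filter, Finset.mem_univ, true_and] at h ⊢
      rw [Finset.sdiff_union_of_subset h.1]
    · intros; rfl
  rw [h1, h2, Fintype.sum_prod_type]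
  have h3 : ∀ u : Finset (Fin m), ∑ w : Finset (Fin m),
      (if (w ⊆ u ∧ loc A Bᶜ u) then (-1) ^ w.card else 0 : ℤ)
      = if u = ∅ then (if A = B then 1 else 0) else 0 := by
    intro u
    by_cases hl : loc A Bᶜ u
    · simp only [hl, and_true]
      rw [← Finset.sum_filter]
      have : Finset.univ.filter (fun w => w ⊆ u) = u.powerset := by ext; simp
      rw [this, Finset.sum_powerset_neg_one_pow_card]
      by_cases hu : u = ∅
      · subst hu
        rw [if_pos rfl, if_pos rfl, if_pos]
        ext i
        have := hl.2 i
        unfold X1 pr at this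
        simp at this
        grind
      · simp [hu]
    · simp only [hl, and_false, if_false, Finset.sum_const_zero]
      by_cases hu : u = ∅
      · subst hu
        rw [if_pos rfl, if_neg]
        rintro rfl
        apply hl
        refine ⟨by simp, fun i => ?_⟩
        unfold X1 pr
        simp
        grind
      · simp [hu]
  simp only [h3]
  simp

lemma TM_mul (m : ℕ) :
    TM m True 1 * (TM m True (-1)).submatrix compl compl = 1 := by
  classical
  ext A B
  rw [Matrix.mul_apply, Matrix.one_apply]
  rw [← TM_inv m A B]
  refine Fintype.sum_equiv (Equiv.mk compl compl compl_compl compl_compl) _ _ fun X => ?_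
  simp

def W {S : Type*} [Fintype S] [DecidableEq S] (M : ℕ → Matrix S S ℤ) : ℕ → Matrix S S ℤ
  | 0 => 1
  | n + 1 => W M n * M n

lemma W_path {S : Type*} [Fintype S] [DecidableEq S] (M : ℕ → Matrix S S ℤ) (n : ℕ) :
    ∀ A B, W M n A B = ∑ h : Fin (n + 1) → S, if h 0 = A ∧ h (Fin.last n) = B then
      ∏ j : Fin n, M j (h j.castSucc) (h j.succ) else 0 := by
  induction n with
  | zero =>
    intro A B
    rw [← (Equiv.funUnique (Fin 1) S).symm.sum_comp]
    simp only [W, Matrix.one_apply]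
    simp [Equiv.funUnique, ite_and]
  | succ n ih =>
    intro A B
    rw [← (Fin.snocEquiv (fun _ : Fin (n + 2) => S)).sum_comp, Fintype.sum_prod_type]
    simp only [W, Matrix.mul_apply, ih, Finset.sum_mul]
    rw [Finset.sum_comm]
    conv_rhs => rw [Finset.sum_comm]
    refine Finset.sum_congr rfl fun h _ => ?_
    have e0 : ∀ x : S, (Fin.snocEquiv (fun _ : Fin (n + 2) => S)) (x, h) 0 = h 0 := by
      intro x
      have := Fin.snoc_castSucc (α := fun _ => S) x h 0
      simpa using this
    have e1 : ∀ x : S, (Fin.snocEquiv (fun _ : Fin (n + 2) => S)) (x, h) (Fin.last _) = x := by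
      intro x
      simp
    have e2 : ∀ x : S, ∏ j : Fin (n+1), M j ((Fin.snocEquiv (fun _ : Fin (n + 2) => S)) (x, h) j.castSucc)
       ((Fin.snocEquiv (fun _ : Fin (n + 2) => S)) (x, h) j.succ) = 
       (∏ j : Fin n, M j (h j.castSucc) (h j.succ)) * M n (h (Fin.last n)) x := by
      intro x
      rw [Fin.prod_univ_castSucc]
      simp [← Fin.castSucc_succ]
    simp only [e0, e1, e2]
    by_cases h0 : h 0 = A
    · simp [h0]
    · simp [h0]

open scoped Classical in
lemma W_path2 (m : ℕ) (ok : ℕ → Prop) (x : ℤ) (n : ℕ) :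
    W (fun j => TM m (ok j) x) n ∅ ∅ =
    ∑ z : (Fin (n + 1) → Finset (Fin m)) × (Fin n → Finset (Fin m)),
      if (z.1 0 = ∅ ∧ z.1 (Fin.last n) = ∅) ∧ ∀ j : Fin n,
        loc (z.1 j.castSucc) (z.1 j.succ) (z.2 j) ∧ ∀ i ∈ z.2 j, ok j then
      x ^ (∑ j, (z.2 j).card) else 0 := by
  rw [W_path, Fintype.sum_prod_type]
  refine Finset.sum_congr rfl fun h _ => ?_
  by_cases hh : h 0 = ∅ ∧ h (Fin.last n) = ∅
  · simp only [hh, and_self, true_and, if_true]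
    unfold TM
    rw [Finset.prod_univ_sum, Fintype.piFinset_univ]
    refine Finset.sum_congr rfl fun v _ => ?_
    rw [Finset.prod_ite_zero]
    simp [Finset.prod_pow_eq_pow_sum]
  · simp [hh]

lemma TM_false (m : ℕ) (x : ℤ) (A B : Finset (Fin m)) :
    TM m False x A B = if A = Bᶜ then 1 else 0 := by
  classical
  unfold TM
  rw [Finset.sum_eq_single ∅]
  · have : loc A B ∅ ↔ A = Bᶜ := by
      unfold loc X1 pr
      simp [Finset.ext_iff]
      refine forall_congr' fun i => ?_
      tauto
    simp [this]
  · intro v _ hv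
    rw [if_neg]
    rintro ⟨-, h⟩
    obtain ⟨i, hi⟩ := Finset.nonempty_iff_ne_empty.2 hv
    exact h i hi
  · simp

lemma W_neg (m k : ℕ) :
    W (fun j => TM m (1 ≤ j ∧ j ≤ k) (-1)) (k + 2) ∅ ∅
      = (TM m True (-1) ^ k) ∅ᶜ ∅ᶜ := by
  have h : ∀ l ≤ k, W (fun j => TM m (1 ≤ j ∧ j ≤ k) (-1)) (l + 1)
      = TM m False (-1) * TM m True (-1) ^ l := by
    intro l hl
    induction l with
    | zero => simp [W]
    | succ l ih =>
      rw [W, ih (by omega), pow_succ, ← mul_assoc]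
      have : (1 ≤ l + 1 ∧ l + 1 ≤ k) = True := by simp; omega
      rw [this]
  rw [W, h k le_rfl]
  have : (1 ≤ k + 1 ∧ k + 1 ≤ k) = False := by simp
  rw [this]
  have e : ∀ A : Finset (Fin m), (∅ = Aᶜ) ↔ A = ∅ᶜ := by
    intro A
    constructor
    · intro h; rw [h, compl_compl]
    · intro h; rw [h, compl_compl]
  simp [Matrix.mul_apply, TM_false, e]

lemma final (m : ℕ) (t : ℤ → ℤ)
    (hp : ∀ n : ℕ, t n = (TM m True 1 ^ n) ∅ ∅)
    (hn : ∀ n : ℕ, t (-n) = (TM m True (-1) ^ n) ∅ᶜ ∅ᶜ) : 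
    ∃ c : ℕ → ℤ, ∀ n : ℤ,
      t (n + 2 ^ m) = ∑ j ∈ Finset.range (2 ^ m), c j * t (n + j) := by
  set M := TM m True 1 with hM
  set N := (TM m True (-1)).submatrix compl compl with hN
  have hMN : M * N = 1 := TM_mul m
  have hNM : N * M = 1 := mul_eq_one_comm.1 hMN
  let U : (Matrix (Finset (Fin m)) (Finset (Fin m)) ℤ)ˣ := ⟨M, N, hMN, hNM⟩
  have hNp : ∀ k : ℕ, N ^ k = (TM m True (-1) ^ k).submatrix compl compl := by
    intro k
    induction k with
    | zero =>
      ext A B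
      simp [Matrix.one_apply]
    | succ k ih =>
      rw [pow_succ, pow_succ, ih, hN]
      exact Matrix.submatrix_mul_equiv _ _ compl (Equiv.mk compl compl compl_compl compl_compl) compl
  have ht : ∀ n : ℤ, t n = ((U ^ n : (Matrix (Finset (Fin m)) (Finset (Fin m)) ℤ)ˣ) : Matrix (Finset (Fin m)) (Finset (Fin m)) ℤ) ∅ ∅ := by
    intro n
    obtain ⟨k, rfl | rfl⟩ := n.eq_nat_or_neg
    · rw [hp, zpow_natCast, Units.val_pow_eq_pow_val]
    · rw [hn, zpow_neg, zpow_natCast, ← inv_pow, Units.val_pow_eq_pow_val]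
      change _ = (N ^ k) ∅ ∅
      rw [hNp]
      rfl
  have hdeg : M.charpoly.natDegree = 2 ^ m := by
    rw [Matrix.charpoly_natDegree_eq_dim]; simp
  have hCH := Matrix.aeval_self_charpoly M
  rw [Polynomial.aeval_eq_sum_range, hdeg, Finset.sum_range_succ] at hCH
  have hl : M.charpoly.coeff (2 ^ m) = 1 := by
    rw [← hdeg]; exact M.charpoly_monic
  rw [hl, one_smul] at hCH
  refine ⟨fun j => - M.charpoly.coeff j, fun n => ?_⟩
  have e : ∀ j : ℕ, t (n + j) = (((U ^ n : (Matrix (Finset (Fin m)) (Finset (Fin m)) ℤ)ˣ) : Matrix (Finset (Fin m)) (Finset (Fin m)) ℤ) * M ^ j) ∅ ∅ := by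
    intro j
    rw [ht, zpow_add, zpow_natCast, Units.val_mul, Units.val_pow_eq_pow_val]
  have e2 := e (2 ^ m)
  push_cast at e2
  rw [e2, eq_neg_of_add_eq_zero_right hCH]
  simp only [e]
  rw [mul_neg, Finset.mul_sum, Matrix.neg_apply, Matrix.sum_apply]
  rw [← Finset.sum_neg_distrib]
  refine Finset.sum_congr rfl fun j _ => ?_
  rw [Matrix.mul_smul, Matrix.smul_apply, smul_eq_mul, neg_mul, Matrix.coe_units_zpow]

def hs {m n : ℕ} (p q : Fin m × Fin n) : Prop := p.1 = q.1 ∧ (p.2 : ℕ) + 1 = q.2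
def vs {m n : ℕ} (p q : Fin m × Fin n) : Prop := p.2 = q.2 ∧ (p.1 : ℕ) + 1 = q.1

def gg (m n : ℕ) (ok : ℕ → Prop) : SimpleGraph (Fin m × Fin n) :=
  SimpleGraph.fromRel (fun p q => hs p q ∨ (vs p q ∧ ok p.2))

lemma gg_adj {m n : ℕ} {ok : ℕ → Prop} {p q : Fin m × Fin n} :
    s(p, q) ∈ (gg m n ok).edgeSet ↔
      hs p q ∨ hs q p ∨ (vs p q ∧ ok p.2) ∨ (vs q p ∧ ok q.2) := by
  rw [SimpleGraph.mem_edgeSet, gg, SimpleGraph.fromRel_adj]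
  constructor
  · tauto
  · intro h
    refine ⟨?_, by tauto⟩
    rintro rfl
    unfold hs vs at h
    omega

section
variable {m n : ℕ}
def eR (P : Finset (Sym2 (Fin m × Fin n))) (p : Fin m × Fin n) : Prop := ∃ q, hs p q ∧ s(p, q) ∈ P
def eL (P : Finset (Sym2 (Fin m × Fin n))) (p : Fin m × Fin n) : Prop := ∃ q, hs q p ∧ s(p, q) ∈ P
def eD (P : Finset (Sym2 (Fin m × Fin n))) (p : Fin m × Fin n) : Prop := ∃ q, vs p q ∧ s(p, q) ∈ P
def eU (P : Finset (Sym2 (Fin m × Fin n))) (p : Fin m × Fin n) : Prop := ∃ q, vs q p ∧ s(p, q) ∈ P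

lemma pm_local (ok : ℕ → Prop) (P : Finset (Sym2 (Fin m × Fin n)))
    (hP : ∀ e ∈ P, e ∈ (gg m n ok).edgeSet) (p : Fin m × Fin n) :
    (∃! e, e ∈ P ∧ p ∈ e) ↔ X1 (eR P p) (eL P p) (eD P p) (eU P p) := by
  have cl : ∀ q, s(p, q) ∈ P → hs p q ∨ hs q p ∨ vs p q ∨ vs q p := by
    intro q hq
    have := gg_adj.1 (hP _ hq)
    tauto
  have inj : ∀ q q', s(p, q) = s(p, q') → q = q' := fun q q' h => Sym2.congr_right.1 h
  constructor
  · rintro ⟨e, ⟨he, hpe⟩, hu⟩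
    have uq : ∀ q q', s(p, q) ∈ P → s(p, q') ∈ P → q = q' := by
      intro q q' h h'
      apply inj
      rw [hu _ ⟨h, Sym2.mem_mk_left _ _⟩, hu _ ⟨h', Sym2.mem_mk_left _ _⟩]
    obtain ⟨q, rfl⟩ := Sym2.mem_iff_exists.1 hpe
    refine ⟨?_, ?_, ?_, ?_, ?_, ?_, ?_⟩
    · rcases cl q he with h | h | h | h
      · exact Or.inl ⟨q, h, he⟩
      · exact Or.inr (Or.inl ⟨q, h, he⟩)
      · exact Or.inr (Or.inr (Or.inl ⟨q, h, he⟩))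
      · exact Or.inr (Or.inr (Or.inr ⟨q, h, he⟩))
    all_goals
      rintro ⟨⟨a, h1, h2⟩, ⟨b, h3, h4⟩⟩
      have := uq _ _ h2 h4
      subst this
      simp only [hs, vs] at *
      simp only [Fin.ext_iff] at *
      omega
  · rintro ⟨h0, h1, h2, h3, h4, h5, h6⟩
    have ex : ∃ q, s(p, q) ∈ P := by
      rcases h0 with ⟨q, _, h⟩ | ⟨q, _, h⟩ | ⟨q, _, h⟩ | ⟨q, _, h⟩ <;> exact ⟨q, h⟩
    obtain ⟨q, hq⟩ := ex
    refine ⟨s(p, q), ⟨hq, Sym2.mem_mk_left _ _⟩, ?_⟩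
    rintro e ⟨he, hpe⟩
    obtain ⟨q', rfl⟩ := Sym2.mem_iff_exists.1 hpe
    have hcl : (hs p q ∧ hs p q') ∨ (hs q p ∧ hs q' p) ∨ (vs p q ∧ vs p q') ∨ (vs q p ∧ vs q' p) := by
      have rR : ∀ q, s(p, q) ∈ P → hs p q → eR P p := fun q h h' => ⟨q, h', h⟩
      have rL : ∀ q, s(p, q) ∈ P → hs q p → eL P p := fun q h h' => ⟨q, h', h⟩
      have rD : ∀ q, s(p, q) ∈ P → vs p q → eD P p := fun q h h' => ⟨q, h', h⟩
      have rU : ∀ q, s(p, q) ∈ P → vs q p → eU P p := fun q h h' => ⟨q, h', h⟩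
      rcases cl q hq with a | a | a | a <;> rcases cl q' he with b | b | b | b <;> grind
    have : q' = q := by
      unfold hs vs at hcl
      simp only [Fin.ext_iff, Prod.ext_iff] at *
      omega
    rw [this]

open scoped Classical in
noncomputable def fh (P : Finset (Sym2 (Fin m × Fin n))) (k : Fin (n + 1)) : Finset (Fin m) :=
  Finset.univ.filter fun i => ∃ j : Fin n, (j : ℕ) + 1 = k ∧ eR P (i, j)

open scoped Classical in
noncomputable def fv (P : Finset (Sym2 (Fin m × Fin n))) (j : Fin n) : Finset (Fin m) :=
  Finset.univ.filter fun i => eD P (i, j)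

open scoped Classical in
noncomputable def bk (h : Fin (n + 1) → Finset (Fin m)) (v : Fin n → Finset (Fin m)) :
    Finset (Sym2 (Fin m × Fin n)) :=
  Finset.univ.filter fun e => ∃ p q, e = s(p, q) ∧
    ((hs p q ∧ p.1 ∈ h p.2.succ) ∨ (vs p q ∧ p.1 ∈ v p.2))

lemma mem_bk {h : Fin (n + 1) → Finset (Fin m)} {v : Fin n → Finset (Fin m)} {p q : Fin m × Fin n} :
    s(p, q) ∈ bk h v ↔ (hs p q ∧ p.1 ∈ h p.2.succ) ∨ (vs p q ∧ p.1 ∈ v p.2) ∨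
      (hs q p ∧ q.1 ∈ h q.2.succ) ∨ (vs q p ∧ q.1 ∈ v q.2) := by
  unfold bk
  simp only [Finset.mem_filter, Finset.mem_univ, true_and, Sym2.eq_iff]
  constructor
  · rintro ⟨a, b, ⟨rfl, rfl⟩ | ⟨rfl, rfl⟩, h⟩ <;> tauto
  · rintro (h | h | h | h)
    · exact ⟨p, q, by tauto, by tauto⟩
    · exact ⟨p, q, by tauto, by tauto⟩
    · exact ⟨q, p, by tauto, by tauto⟩
    · exact ⟨q, p, by tauto, by tauto⟩

lemma fh_succ (P : Finset (Sym2 (Fin m × Fin n))) (i : Fin m) (j : Fin n) :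
    i ∈ fh P j.succ ↔ eR P (i, j) := by
  unfold fh
  simp only [Finset.mem_filter, Finset.mem_univ, true_and, Fin.val_succ]
  constructor
  · rintro ⟨j', h, h'⟩
    have : j' = j := by ext; omega
    rwa [← this]
  · intro h; exact ⟨j, rfl, h⟩

lemma fh_cast (P : Finset (Sym2 (Fin m × Fin n))) (i : Fin m) (j : Fin n) :
    i ∈ fh P j.castSucc ↔ eL P (i, j) := by
  unfold fh eL eR
  simp only [Finset.mem_filter, Finset.mem_univ, true_and, Fin.val_castSucc]
  constructor
  · rintro ⟨j', h, q, h1, h2⟩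
    have : q = (i, j) := by
      unfold hs at h1
      ext
      · simp [← h1.1]
      · simp at h1 ⊢; omega
    subst this
    exact ⟨(i, j'), h1, by rwa [Sym2.eq_swap]⟩
  · rintro ⟨q, h1, h2⟩
    have h1' := h1
    unfold hs at h1'
    simp only at h1'
    refine ⟨q.2, h1'.2, (i, j), ?_, ?_⟩
    · exact ⟨rfl, h1'.2⟩
    · have e : q = (i, q.2) := Prod.ext h1'.1 rfl
      rw [← e, Sym2.eq_swap]; exact h2

lemma mem_fv (P : Finset (Sym2 (Fin m × Fin n))) (i : Fin m) (j : Fin n) :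
    i ∈ fv P j ↔ eD P (i, j) := by
  simp [fv]

lemma pr_fv (P : Finset (Sym2 (Fin m × Fin n))) (i : Fin m) (j : Fin n) :
    pr (fv P j) i ↔ eU P (i, j) := by
  unfold pr eU
  simp only [mem_fv]
  unfold eD
  constructor
  · rintro ⟨i', h, q, h1, h2⟩
    have : q = (i, j) := by
      unfold vs at h1
      ext
      · simp at h1 ⊢; omega
      · simp [← h1.1]
    subst this
    exact ⟨(i', j), h1, by rwa [Sym2.eq_swap]⟩
  · rintro ⟨q, h1, h2⟩
    have h1' := h1
    unfold vs at h1'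
    simp only at h1'
    refine ⟨q.1, h1'.2, (i, j), ?_, ?_⟩
    · exact ⟨rfl, h1'.2⟩
    · have e : q = (q.1, j) := Prod.ext rfl h1'.1
      rw [← e, Sym2.eq_swap]; exact h2

lemma fh_zero (P : Finset (Sym2 (Fin m × Fin n))) : fh P 0 = ∅ := by
  ext i; simp [fh]

lemma fh_last (P : Finset (Sym2 (Fin m × Fin n))) : fh P (Fin.last n) = ∅ := by
  ext i
  simp only [fh, Finset.mem_filter, Finset.mem_univ, true_and, Finset.notMem_empty, iff_false, Fin.val_last]
  rintro ⟨j, h, q, h1, h2⟩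
  have := q.2.2
  unfold hs at h1
  simp at h1
  omega

/-- good data -/
def Gd (ok : ℕ → Prop) (h : Fin (n + 1) → Finset (Fin m)) (v : Fin n → Finset (Fin m)) : Prop :=
  (h 0 = ∅ ∧ h (Fin.last n) = ∅) ∧ ∀ j : Fin n,
        loc (h j.castSucc) (h j.succ) (v j) ∧ ∀ i ∈ v j, ok j

lemma fwd (ok : ℕ → Prop) (P : Finset (Sym2 (Fin m × Fin n))) (hP : IsPM (gg m n ok) P) :
    Gd ok (fh P) (fv P) := by
  refine ⟨⟨fh_zero P, fh_last P⟩, fun j => ⟨⟨?_, ?_⟩, ?_⟩⟩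
  · intro i hi
    obtain ⟨q, h, -⟩ := (mem_fv P i j).1 hi
    have := q.1.2
    unfold vs at h
    simp at h
    omega
  · intro i
    rw [fh_succ, fh_cast, mem_fv, pr_fv]
    exact (pm_local ok P hP.1 (i, j)).1 (hP.2 _)
  · intro i hi
    obtain ⟨q, h, h2⟩ := (mem_fv P i j).1 hi
    have := gg_adj.1 (hP.1 _ h2)
    simp only [hs, vs] at *
    simp only [Fin.ext_iff] at *
    rcases this with h | h | h | h
    · omega
    · omega
    · exact h.2
    · omega

lemma Gd_lt {ok : ℕ → Prop} {h : Fin (n + 1) → Finset (Fin m)} {v : Fin n → Finset (Fin m)}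
    (g : Gd ok h v) {i : Fin m} {j : Fin n} (hi : i ∈ h j.succ) : (j : ℕ) + 1 < n := by
  by_contra hc
  have : j.succ = Fin.last n := by ext; simp; omega
  rw [this, g.1.2] at hi
  simp at hi

lemma eR_bk {ok : ℕ → Prop} {h : Fin (n + 1) → Finset (Fin m)} {v : Fin n → Finset (Fin m)}
    (g : Gd ok h v) (i : Fin m) (j : Fin n) : eR (bk h v) (i, j) ↔ i ∈ h j.succ := by
  unfold eR
  simp only [mem_bk]
  constructor
  · rintro ⟨q, h1, h2 | h2 | h2 | h2⟩
    · exact h2.2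
    all_goals
      exfalso
      simp only [hs, vs] at *
      simp only [Fin.ext_iff] at *
      omega
  · intro hi
    exact ⟨(i, ⟨j + 1, Gd_lt g hi⟩), ⟨rfl, rfl⟩, Or.inl ⟨⟨rfl, rfl⟩, hi⟩⟩

lemma eD_bk {ok : ℕ → Prop} {h : Fin (n + 1) → Finset (Fin m)} {v : Fin n → Finset (Fin m)}
    (g : Gd ok h v) (i : Fin m) (j : Fin n) : eD (bk h v) (i, j) ↔ i ∈ v j := by
  unfold eD
  simp only [mem_bk]
  constructor
  · rintro ⟨q, h1, h2 | h2 | h2 | h2⟩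
    · exfalso
      simp only [hs, vs] at *
      simp only [Fin.ext_iff] at *
      omega
    · exact h2.2
    all_goals
      exfalso
      simp only [hs, vs] at *
      simp only [Fin.ext_iff] at *
      omega
  · intro hi
    exact ⟨(⟨i + 1, (g.2 j).1.1 i hi⟩, j), ⟨rfl, rfl⟩, Or.inr (Or.inl ⟨⟨rfl, rfl⟩, hi⟩)⟩

lemma fh_bk {ok : ℕ → Prop} {h : Fin (n + 1) → Finset (Fin m)} {v : Fin n → Finset (Fin m)}
    (g : Gd ok h v) : fh (bk h v) = h := by
  funext k
  refine Fin.cases ?_ (fun j => ?_) k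
  · rw [fh_zero, g.1.1]
  · ext i
    rw [fh_succ, eR_bk g]

lemma fv_bk {ok : ℕ → Prop} {h : Fin (n + 1) → Finset (Fin m)} {v : Fin n → Finset (Fin m)}
    (g : Gd ok h v) : fv (bk h v) = v := by
  funext j
  ext i
  rw [mem_fv, eD_bk g]

lemma bwd {ok : ℕ → Prop} {h : Fin (n + 1) → Finset (Fin m)} {v : Fin n → Finset (Fin m)}
    (g : Gd ok h v) : IsPM (gg m n ok) (bk h v) := by
  have h0 : ∀ e ∈ bk h v, e ∈ (gg m n ok).edgeSet := by
    intro e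
    induction e with
    | _ p q =>
      rw [mem_bk, gg_adj]
      rintro (h | h | h | h)
      · exact Or.inl h.1
      · exact Or.inr (Or.inr (Or.inl ⟨h.1, (g.2 _).2 _ h.2⟩))
      · exact Or.inr (Or.inl h.1)
      · exact Or.inr (Or.inr (Or.inr ⟨h.1, (g.2 _).2 _ h.2⟩))
  refine ⟨h0, ?_⟩
  rintro ⟨i, j⟩
  rw [pm_local ok _ h0, ← fh_succ, ← fh_cast, ← mem_fv, ← pr_fv, fh_bk g, fv_bk g]
  exact (g.2 j).1.2 i

lemma bk_f (ok : ℕ → Prop) (P : Finset (Sym2 (Fin m × Fin n)))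
    (hP : ∀ e ∈ P, e ∈ (gg m n ok).edgeSet) : bk (fh P) (fv P) = P := by
  have aR : ∀ p q : Fin m × Fin n, (hs p q ∧ p.1 ∈ fh P p.2.succ) ↔ (hs p q ∧ s(p, q) ∈ P) := by
    intro p q
    refine and_congr_right fun h => ?_
    rw [fh_succ]
    constructor
    · rintro ⟨q', h1, h2⟩
      have : q' = q := by
        unfold hs at *
        simp only [Fin.ext_iff, Prod.ext_iff] at *
        omega
      rwa [← this]
    · intro h2; exact ⟨q, h, h2⟩
  have aD : ∀ p q : Fin m × Fin n, (vs p q ∧ p.1 ∈ fv P p.2) ↔ (vs p q ∧ s(p, q) ∈ P) := by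
    intro p q
    refine and_congr_right fun h => ?_
    rw [mem_fv]
    constructor
    · rintro ⟨q', h1, h2⟩
      have : q' = q := by
        unfold vs at *
        simp only [Fin.ext_iff, Prod.ext_iff] at *
        omega
      rwa [← this]
    · intro h2; exact ⟨q, h, h2⟩
  ext e
  induction e with
  | _ p q =>
    rw [mem_bk, aR, aR, aD, aD, Sym2.eq_swap (a := q)]
    constructor
    · tauto
    · intro h
      have := gg_adj.1 (hP _ h)
      tauto

lemma vert_eq (ok : ℕ → Prop) (P : Finset (Sym2 (Fin m × Fin n)))
    (hP : ∀ e ∈ P, e ∈ (gg m n ok).edgeSet) : vert P = ∑ j, (fv P j).card := by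
  classical
  rw [← Finset.card_sigma]
  unfold vert
  symm
  have lt : ∀ (i : Fin m) (j : Fin n), i ∈ fv P j → (i : ℕ) + 1 < m ∧
      ∀ h : (i : ℕ) + 1 < m, s((i, j), (⟨i + 1, h⟩, j)) ∈ P := by
    intro i j hi
    obtain ⟨q, h, h2⟩ := (mem_fv P i j).1 hi
    have := q.1.2
    unfold vs at h
    simp at h
    refine ⟨by omega, fun h' => ?_⟩
    convert h2
    · exact h.2
    · exact h.1
  refine Finset.card_bij (fun a ha => s((a.2, a.1), (⟨a.2 + 1, (lt a.2 a.1 (by simpa using ha)).1⟩, a.1))) ?_ ?_ ?_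
  · rintro ⟨j, i⟩ ha
    simp only [Finset.mem_filter]
    refine ⟨(lt i j (by simpa using ha)).2 _, _, _, rfl, ?_⟩
    simp [Fin.ext_iff]
  · rintro ⟨j, i⟩ ha ⟨j', i'⟩ ha' h
    simp only [Sym2.eq_iff, Prod.ext_iff, Fin.ext_iff] at h
    have h1 : i = i' := by ext; omega
    have h2 : j = j' := by ext; omega
    subst h1 h2
    rfl
  · intro e he
    simp only [Finset.mem_filter] at he
    obtain ⟨he, p, q, rfl, hne⟩ := he
    have key : ∀ p q : Fin m × Fin n, vs p q → s(p, q) ∈ P →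
      ∃ a, ∃ (ha : a ∈ Finset.univ.sigma (fun j => fv P j)), s((a.2, a.1), ((⟨a.2 + 1, (lt a.2 a.1 (by simpa using ha)).1⟩ : Fin m), a.1)) = s(p, q) := by
      intro p q h h'
      refine ⟨⟨p.2, p.1⟩, ?_, ?_⟩
      · simp only [Finset.mem_sigma, Finset.mem_univ, true_and]
        rw [mem_fv]
        exact ⟨q, h, h'⟩
      · congr 2
        unfold vs at h
        ext
        · exact h.2
        · simp [h.1]
    have := gg_adj.1 (hP _ he)
    unfold hs at this
    rcases this with h | h | h | h
    · exact absurd h.1 hne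
    · exact absurd h.1.symm hne
    · exact key p q h.1 he
    · rw [Sym2.eq_swap]
      exact key q p h.1 (by rwa [Sym2.eq_swap])
end

lemma sum_eq_W (m n : ℕ) (ok : ℕ → Prop) (x : ℤ) :
    ∑ P ∈ pmFinset (gg m n ok), x ^ vert P = W (fun j => TM m (ok j) x) n ∅ ∅ := by
  classical
  rw [W_path2, ← Finset.sum_filter]
  refine Finset.sum_bij' (fun P _ => (fh P, fv P)) (fun z _ => bk z.1 z.2) ?_ ?_ ?_ ?_ ?_
  · intro P hP
    simp only [pmFinset, Finset.mem_filter, Finset.mem_univ, true_and] at hP ⊢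
    exact fwd ok P hP
  · intro z hz
    simp only [pmFinset, Finset.mem_filter, Finset.mem_univ, true_and] at hz ⊢
    exact bwd hz
  · intro P hP
    simp only [pmFinset, Finset.mem_filter, Finset.mem_univ, true_and] at hP
    exact bk_f ok P hP.1
  · intro z hz
    simp only [Finset.mem_filter, Finset.mem_univ, true_and] at hz
    exact Prod.ext (fh_bk hz) (fv_bk hz)
  · intro P hP
    simp only [pmFinset, Finset.mem_filter, Finset.mem_univ, true_and] at hP
    rw [vert_eq ok P hP.1]

lemma T_eq (m n : ℕ) : (T m n : ℤ) = (TM m True 1 ^ n) ∅ ∅ := by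
  classical
  have h1 : gg m n (fun _ => True) = grid m n := by
    unfold gg grid hs vs; simp
  have h2 := sum_eq_W m n (fun _ => True) 1
  have h3 : ∀ n, W (fun _ => TM m True 1) n = TM m True 1 ^ n := by
    intro n
    induction n with
    | zero => simp [W]
    | succ n ih => rw [W, ih, pow_succ]
  rw [h3, h1] at h2
  rw [← h2]
  simp only [one_pow, Finset.sum_const, T]
  rw [show {P | IsPM (grid m n) P} = ((pmFinset (grid m n) : Finset _) : Set _) by ext; simp [pmFinset],
    Set.ncard_coe_finset]
  simp

lemma Ms_eq (m k : ℕ) : Msigned m k = (TM m True (-1) ^ k) ∅ᶜ ∅ᶜ := by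
  rw [← W_neg, ← sum_eq_W m (k + 2) (fun j => 1 ≤ j ∧ j ≤ k)]
  have h1 : gg m (k + 2) (fun j => 1 ≤ j ∧ j ≤ k) = negGrid m k := by
    unfold gg negGrid hs vs; simp only [and_assoc]
  rw [h1, Msigned]

/-- The doubly-infinite sequence of ordinary and signed matching counts satisfies
a single constant-coefficient linear recurrence of order 2^m. -/
theorem two_sided_recurrence (m : ℕ) (hm : 1 ≤ m) (t : ℤ → ℤ)
    (hpos : ∀ n : ℤ, 1 ≤ n → t n = T m n.toNat)
    (hneg : ∀ n : ℤ, n ≤ 0 → t n = Msigned m (-n).toNat) :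
    ∃ c : ℕ → ℤ, ∀ n : ℤ,
      t (n + 2 ^ m) = ∑ j ∈ Finset.range (2 ^ m), c j * t (n + j) := by
  have hn : ∀ n : ℕ, t (-n) = (TM m True (-1) ^ n) ∅ᶜ ∅ᶜ := by
    intro n
    rw [hneg _ (by omega), Ms_eq]
    simp
  refine final m t ?_ hn
  intro n
  rcases Nat.eq_zero_or_pos n with rfl | h
  · have := hn 0
    simpa using this
  · rw [hpos _ (by omega), T_eq]
    simp
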